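/- Let (α_k)_{k≥1} be nonnegative real numbers with Σ_{k≥1} k·α_k < ∞. Then the infinite linear system w_k = 1 + Σ_{m>k} 2(m−k)·w_m·α_m, for k = 0, 1, 2, …, has a unique solution (w_k)_{k≥0} with 0 ≤ w_k < ∞ for all k. Moreover, setting c_k := 2·Σ_{m>k} (m−k)·α_m, one has w_k ≤ 1/(1−c_k) < 2 for every k such that c_k < 1/2. -/

import Mathlib

open Filter Topology

theorem sds_super (b : ℕ → ℝ) (hb : ∀ k, 0 ≤ b k) (hs : Summable b) (A : ℕ → ℕ → ℝ)
    (hA : ∀ k m, A k m ≤ b m) (hA' : ∀ k m, ¬ k < m → A k m = 0) (hA0 : ∀ k m, 0 ≤ A k m) :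
    ∃ V : ℕ → ℝ, (∀ k, 1 ≤ V k) ∧ (∀ k, V k ≤ V 0) ∧
      (∀ k, Summable fun m => A k m * V m) ∧ ∀ k, ∑' m, A k m * V m ≤ V k - 1 := by
  set T : ℕ → ℝ := fun k => ∑' i, b (i + (k + 1)) with hT
  have hT0 : ∀ k, 0 ≤ T k := fun k => tsum_nonneg fun i => hb _
  have hTs : ∀ n, T n = b (n + 1) + T (n + 1) := by
    intro n
    have h := ((summable_nat_add_iff (n + 1)).2 hs).tsum_eq_zero_add
    simp only [hT]
    rw [h]
    congr 1
    · congr 1; omega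
    · congr 1; funext i; congr 1; omega
  set V : ℕ → ℝ := fun k => Real.exp (T k) with hV
  have hV1 : ∀ k, 1 ≤ V k := fun k => Real.one_le_exp (hT0 k)
  have hstep : ∀ n, b (n + 1) * V (n + 1) ≤ V n - V (n + 1) := by
    intro n
    simp only [hV]
    rw [hTs n, Real.exp_add]
    have h1 := Real.add_one_le_exp (b (n + 1))
    nlinarith [Real.exp_pos (T (n + 1))]
  have hanti : Antitone V := antitone_nat_of_succ_le fun n => by
    have := hstep n
    have := mul_nonneg (hb (n + 1)) (zero_le_one.trans (hV1 (n + 1)))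
    linarith
  have hpart : ∀ k n, ∑ m ∈ Finset.range (n + 1), A k m * V m ≤ V k - V (max k n) := by
    intro k n
    induction n with
    | zero => simp [hA' k 0 (by omega)]
    | succ n ih =>
      rw [Finset.sum_range_succ]
      by_cases h : k < n + 1
      · rw [max_eq_right (by omega : k ≤ n)] at ih
        rw [max_eq_right (by omega : k ≤ n + 1)]
        have h1 := mul_le_mul_of_nonneg_right (hA k (n + 1)) (zero_le_one.trans (hV1 (n + 1)))
        linarith [hstep n]
      · rw [hA' k (n + 1) h, max_eq_left (by omega : n + 1 ≤ k)]
        rw [max_eq_left (by omega : n ≤ k)] at ih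
        linarith
  have hnn : ∀ k m, 0 ≤ A k m * V m := fun k m =>
    mul_nonneg (hA0 k m) (zero_le_one.trans (hV1 m))
  have hr : ∀ k n, ∑ m ∈ Finset.range n, A k m * V m ≤ V k - 1 := by
    intro k n
    have h1 := hpart k n
    rw [Finset.sum_range_succ] at h1
    linarith [hnn k n, hV1 (max k n)]
  exact ⟨V, hV1, fun k => hanti (Nat.zero_le k),
    fun k => summable_of_sum_range_le (hnn k) (hr k),
    fun k => Real.tsum_le_of_sum_range_le (hnn k) (hr k)⟩

theorem sds_exists (A : ℕ → ℕ → ℝ) (hA0 : ∀ k m, 0 ≤ A k m) (V : ℕ → ℝ)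
    (hV1 : ∀ k, 1 ≤ V k) (hVs : ∀ k, Summable fun m => A k m * V m)
    (hV : ∀ k, ∑' m, A k m * V m ≤ V k - 1) :
    ∃ w : ℕ → ℝ, (∀ k, 0 ≤ w k) ∧ (∀ k, Summable fun m => A k m * w m) ∧
      ∀ k, w k = 1 + ∑' m, A k m * w m := by
  set F : (ℕ → ℝ) → ℕ → ℝ := fun u k => 1 + ∑' m, A k m * u m with hF
  set u : ℕ → ℕ → ℝ := fun n => F^[n] 0 with hu
  have hu0 : u 0 = 0 := rfl
  have hus : ∀ n k, u (n + 1) k = 1 + ∑' m, A k m * u n m := by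
    intro n k
    simp only [hu, Function.iterate_succ_apply']
    rfl
  have hsm : ∀ x : ℕ → ℝ, (∀ m, 0 ≤ x m) → (∀ m, x m ≤ V m) →
      ∀ k, Summable fun m => A k m * x m := fun x h0 h1 k =>
    Summable.of_nonneg_of_le (fun m => mul_nonneg (hA0 k m) (h0 m))
      (fun m => mul_le_mul_of_nonneg_left (h1 m) (hA0 k m)) (hVs k)
  have hb : ∀ n, (∀ k, 0 ≤ u n k) ∧ ∀ k, u n k ≤ V k := by
    intro n
    induction n with
    | zero => exact ⟨fun k => by simp [hu0], fun k => by
        rw [hu0]; exact zero_le_one.trans (hV1 k)⟩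
    | succ n ih =>
      refine ⟨fun k => ?_, fun k => ?_⟩
      · rw [hus]
        have : 0 ≤ ∑' m, A k m * u n m := tsum_nonneg fun m => mul_nonneg (hA0 k m) (ih.1 m)
        linarith
      · rw [hus]
        have : ∑' m, A k m * u n m ≤ ∑' m, A k m * V m :=
          (hsm _ ih.1 ih.2 k).tsum_le_tsum
            (fun m => mul_le_mul_of_nonneg_left (ih.2 m) (hA0 k m)) (hVs k)
        linarith [hV k]
  have hmono : ∀ n k, u n k ≤ u (n + 1) k := by
    intro n
    induction n with
    | zero => intro k; rw [hu0]; exact (hb 1).1 k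
    | succ n ih =>
      intro k
      rw [hus n, hus (n + 1)]
      have := (hsm _ (hb n).1 (hb n).2 k).tsum_le_tsum
            (fun m => mul_le_mul_of_nonneg_left (ih m) (hA0 k m))
            (hsm _ (hb (n+1)).1 (hb (n+1)).2 k)
      linarith
  have hlim : ∀ k, ∃ l, Tendsto (fun n => u n k) atTop (𝓝 l) := fun k =>
    ⟨_, tendsto_atTop_ciSup (monotone_nat_of_le_succ fun n => hmono n k)
      ⟨V k, by rintro _ ⟨n, rfl⟩; exact (hb n).2 k⟩⟩
  choose w hw using hlim
  have hw0 : ∀ k, 0 ≤ w k := fun k => ge_of_tendsto' (hw k) fun n => (hb n).1 k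
  have hwV : ∀ k, w k ≤ V k := fun k => le_of_tendsto' (hw k) fun n => (hb n).2 k
  refine ⟨w, hw0, hsm w hw0 hwV, fun k => ?_⟩
  have h1 : Tendsto (fun n => ∑' m, A k m * u n m) atTop (𝓝 (∑' m, A k m * w m)) := by
    refine tendsto_tsum_of_dominated_convergence (hVs k)
      (fun m => (hw m).const_mul _) (Eventually.of_forall fun n m => ?_)
    rw [Real.norm_of_nonneg (mul_nonneg (hA0 k m) ((hb n).1 m))]
    exact mul_le_mul_of_nonneg_left ((hb n).2 m) (hA0 k m)
  have h2 := (hw k).comp (tendsto_add_atTop_nat 1)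
  refine tendsto_nhds_unique h2 ((h1.const_add 1).congr fun n => ?_)
  exact (hus n k).symm

theorem sds_unique (A : ℕ → ℕ → ℝ) (hA0 : ∀ k m, 0 ≤ A k m) (V : ℕ → ℝ)
    (hV1 : ∀ k, 1 ≤ V k) (hVM : ∀ k, V k ≤ V 0) (hVs : ∀ k, Summable fun m => A k m * V m)
    (hV : ∀ k, ∑' m, A k m * V m ≤ V k - 1) (w w' : ℕ → ℝ)
    (h0 : ∀ k, 0 ≤ w k) (h0' : ∀ k, 0 ≤ w' k) (ha : ∀ k, w k ≤ w 0) (ha' : ∀ k, w' k ≤ w' 0)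
    (hs : ∀ k, Summable fun m => A k m * w m) (hs' : ∀ k, Summable fun m => A k m * w' m)
    (he : ∀ k, w k = 1 + ∑' m, A k m * w m) (he' : ∀ k, w' k = 1 + ∑' m, A k m * w' m) :
    w' = w := by
  have hM : 0 < V 0 := zero_lt_one.trans_le (hV1 0)
  set q : ℝ := 1 - 1 / V 0 with hq
  have hinv : 1 / V 0 ≤ 1 := by rw [div_le_one hM]; exact hV1 0
  have hinv0 : 0 < 1 / V 0 := by positivity
  have hq0 : 0 ≤ q := by linarith
  have hq1 : q < 1 := by linarith
  have hVq : ∀ k, ∑' m, A k m * V m ≤ q * V k := by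
    intro k
    have : 1 / V 0 * V k ≤ 1 := by
      rw [one_div, inv_mul_le_iff₀ hM]; linarith [hVM k]
    have := hV k
    rw [hq]; linarith
  set B := w 0 + w' 0 with hB
  have hB0 : 0 ≤ B := add_nonneg (h0 0) (h0' 0)
  have key : ∀ n k, |w' k - w k| ≤ B * q ^ n * V k := by
    intro n
    induction n with
    | zero =>
      intro k
      have h1 : |w' k - w k| ≤ B := by
        rw [abs_le]; constructor <;> linarith [h0 k, h0' k, ha k, ha' k, h0 0, h0' 0]
      nlinarith [hV1 k]
    | succ n ih =>
      intro k
      have e : w' k - w k = ∑' m, (A k m * w' m - A k m * w m) := by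
        rw [(hs' k).tsum_sub (hs k), he k, he' k]; ring
      have hb : ∀ m, ‖A k m * w' m - A k m * w m‖ ≤ B * q ^ n * (A k m * V m) := by
        intro m
        rw [← mul_sub, Real.norm_eq_abs, abs_mul, abs_of_nonneg (hA0 k m)]
        have := mul_le_mul_of_nonneg_left (ih m) (hA0 k m)
        linarith
      have h1 := tsum_of_norm_bounded (((hVs k).mul_left (B * q ^ n)).hasSum) hb
      rw [← e, tsum_mul_left, Real.norm_eq_abs] at h1
      have h2 := mul_le_mul_of_nonneg_left (hVq k) (mul_nonneg hB0 (pow_nonneg hq0 n))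
      rw [pow_succ]
      linarith
  funext k
  have hl : Tendsto (fun n : ℕ => B * q ^ n * V k) atTop (𝓝 (B * 0 * V k)) :=
    ((tendsto_pow_atTop_nhds_zero_of_lt_one hq0 hq1).const_mul B).mul_const _
  have := ge_of_tendsto' hl fun n => key n k
  have h3 : |w' k - w k| = 0 := le_antisymm (by simpa using this) (abs_nonneg _)
  linarith [abs_eq_zero.1 h3]

/-- Let `(α_k)_{k≥1}` be nonnegative reals with
`Σ_{k≥1} k·α_k < ∞`.  Then the infinite linear system
`w_k = 1 + Σ_{m>k} 2(m−k)·w_m·α_m`, `k = 0, 1, 2, …`, has a unique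
(nonnegative, finite, summable) solution `(w_k)_{k≥0}`.  Moreover, setting
`c_k := 2·Σ_{m>k} (m−k)·α_m`, one has `w_k ≤ 1/(1−c_k) < 2` for every `k` with
`c_k < 1/2`. -/
theorem slot_density_system (α : ℕ → ℝ) (hα : ∀ k, 0 ≤ α k)
    (hsum : Summable fun k : ℕ => (k : ℝ) * α k) :
    ∃ w : ℕ → ℝ,
      ((∀ k, 0 ≤ w k) ∧
        (∀ k : ℕ, Summable fun m : ℕ =>
          if k < m then 2 * ((m : ℝ) - (k : ℝ)) * w m * α m else 0) ∧
        ∀ k : ℕ, w k = 1 + ∑' m : ℕ,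
          if k < m then 2 * ((m : ℝ) - (k : ℝ)) * w m * α m else 0) ∧
      (∀ w' : ℕ → ℝ,
        ((∀ k, 0 ≤ w' k) ∧
          (∀ k : ℕ, Summable fun m : ℕ =>
            if k < m then 2 * ((m : ℝ) - (k : ℝ)) * w' m * α m else 0) ∧
          ∀ k : ℕ, w' k = 1 + ∑' m : ℕ,
            if k < m then 2 * ((m : ℝ) - (k : ℝ)) * w' m * α m else 0) →
        w' = w) ∧
      ∀ k : ℕ,
        2 * (∑' m : ℕ, if k < m then ((m : ℝ) - (k : ℝ)) * α m else 0) < 1 / 2 →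
          w k ≤ 1 / (1 - 2 * (∑' m : ℕ, if k < m then ((m : ℝ) - (k : ℝ)) * α m else 0)) ∧
          1 / (1 - 2 * (∑' m : ℕ, if k < m then ((m : ℝ) - (k : ℝ)) * α m else 0)) < 2 := by
  set A : ℕ → ℕ → ℝ := fun k m => if k < m then 2 * ((m : ℝ) - (k : ℝ)) * α m else 0 with hAd
  have hterm : ∀ (w : ℕ → ℝ) (k : ℕ),
      (fun m : ℕ => if k < m then 2 * ((m : ℝ) - (k : ℝ)) * w m * α m else 0)
        = fun m => A k m * w m := by
    intro w k
    funext m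
    simp only [hAd]
    split_ifs <;> ring
  have hA0 : ∀ k m, 0 ≤ A k m := by
    intro k m
    simp only [hAd]
    split_ifs with h
    · have : (k : ℝ) ≤ m := by exact_mod_cast h.le
      exact mul_nonneg (by linarith) (hα m)
    · exact le_rfl
  have hAb : ∀ k m, A k m ≤ A 0 m := by
    intro k m
    by_cases h : k < m
    · have h0 : 0 < m := by omega
      simp only [hAd, if_pos h, if_pos h0]
      refine mul_le_mul_of_nonneg_right ?_ (hα m)
      have : (0 : ℝ) ≤ k := Nat.cast_nonneg k
      push_cast
      linarith
    · simp only [hAd, if_neg h]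
      exact hA0 0 m
  have hAb0 : ∀ k m, A k m ≤ 2 * ((m : ℝ) * α m) := by
    intro k m
    refine (hAb k m).trans ?_
    simp only [hAd]
    split_ifs with h
    · push_cast; linarith
    · exact mul_nonneg zero_le_two (mul_nonneg (Nat.cast_nonneg m) (hα m))
  obtain ⟨V, hV1, hVM, hVs, hV⟩ := sds_super (fun m => 2 * ((m : ℝ) * α m))
    (fun m => mul_nonneg zero_le_two (mul_nonneg (Nat.cast_nonneg m) (hα m)))
    (hsum.mul_left 2) A hAb0 (fun k m h => by simp only [hAd, if_neg h]) hA0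
  have hanti : ∀ w : ℕ → ℝ, (∀ k, 0 ≤ w k) → (∀ k, Summable fun m => A k m * w m) →
      (∀ k, w k = 1 + ∑' m, A k m * w m) → ∀ j k, j ≤ k → w k ≤ w j := by
    intro w h0 hs he j k hjk
    rw [he k, he j]
    have := (hs k).tsum_le_tsum (g := fun m => A j m * w m) (fun m => by
      refine mul_le_mul_of_nonneg_right ?_ (h0 m)
      have hc : (j : ℝ) ≤ k := by exact_mod_cast hjk
      by_cases h : k < m
      · have h' : j < m := by omega
        simp only [hAd, if_pos h, if_pos h']
        exact mul_le_mul_of_nonneg_right (by linarith) (hα m)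
      · have : A k m = 0 := by simp only [hAd, if_neg h]
        rw [this]
        exact hA0 j m) (hs j)
    linarith
  obtain ⟨w, h0, hs, he⟩ := sds_exists A hA0 V hV1 hVs hV
  refine ⟨w, ⟨h0, fun k => ?_, fun k => ?_⟩, ?_, ?_⟩
  · rw [hterm]; exact hs k
  · rw [hterm]; exact he k
  · rintro w' ⟨h0', hs', he'⟩
    simp only [hterm] at hs' he'
    exact sds_unique A hA0 V hV1 hVM hVs hV w w' h0 h0'
      (fun k => hanti w h0 hs he 0 k (Nat.zero_le k))
      (fun k => hanti w' h0' hs' he' 0 k (Nat.zero_le k)) hs hs' he he'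
  · intro k hk
    have hc : 2 * (∑' m : ℕ, if k < m then ((m : ℝ) - (k : ℝ)) * α m else 0) = ∑' m, A k m := by
      rw [← tsum_mul_left]
      congr 1
      funext m
      simp only [hAd]
      split_ifs <;> ring
    rw [hc] at hk ⊢
    have hAs : Summable fun m => A k m := Summable.of_nonneg_of_le (hA0 k) (hAb0 k)
      (hsum.mul_left 2)
    have h1 : ∑' m, A k m * w m ≤ ∑' m, A k m * w k :=
      (hs k).tsum_le_tsum (fun m => by
        by_cases h : k < m
        · exact mul_le_mul_of_nonneg_left (hanti w h0 hs he k m h.le) (hA0 k m)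
        · have : A k m = 0 := by simp only [hAd, if_neg h]
          simp [this]) (hAs.mul_right _)
    rw [tsum_mul_right] at h1
    have h2 := he k
    have hpos : 0 < 1 - ∑' m, A k m := by linarith
    constructor
    · rw [le_div_iff₀ hpos]; linarith
    · rw [div_lt_iff₀ hpos]; linarith
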